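/- arXiv:2110.01152 — 8 statements merged into one kernel-verified Lean document; each statement's English description precedes it below -/
import Mathlib

section
/- The optimal-cost function is convex in the fairness level: if θ_a and θ_b are real numbers for which θ_a-fair and θ_b-fair probabilistic matchings exist, then for every λ ∈ [0,1] a (λθ_a + (1−λ)θ_b)-fair probabilistic matching exists and F(λθ_a + (1−λ)θ_b) ≤ λ·F(θ_a) + (1−λ)·F(θ_b). -/
/-!
The `θ`-fairness constraints are jointly affine in `(θ, p)`, so mixing a `θa`-fair matching `p` and
a `θb`-fair matching `q` with weights `lam` and `1 - lam` yields a matching that is fair at the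
mixed level (`IsProbMatching.mix`, `IsFair.mix`), and its expected cost is the mixture of the two
costs. Taking `p` and `q` to be `ε`-optimal and letting `ε → 0` gives convexity of `F`. The real
infimum is well behaved because the expected cost is bounded below on the simplex by
`-∑ ℓ, |cost ℓ|`.
-/

/-- `p` is a probabilistic matching over `η` deterministic matchings. -/
def IsProbMatching (η : ℕ) (p : Fin η → ℝ) : Prop :=
  (∀ ℓ, 0 ≤ p ℓ) ∧ ∑ ℓ, p ℓ = 1

/-- `p` is `θ`-fair: every rider is matched with probability at least `θ`. -/
def IsFair (m η : ℕ) (M : Fin m → Fin η → ℝ) (θ : ℝ) (p : Fin η → ℝ) : Prop :=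
  ∀ r, θ ≤ ∑ ℓ, M r ℓ * p ℓ

/-- `F θ`: the infimum of the expected cost over all `θ`-fair probabilistic matchings. -/
noncomputable def F (m η : ℕ) (M : Fin m → Fin η → ℝ) (cost : Fin η → ℝ) (θ : ℝ) : ℝ :=
  sInf {c : ℝ | ∃ p : Fin η → ℝ,
    IsProbMatching η p ∧ IsFair m η M θ p ∧ ∑ ℓ, cost ℓ * p ℓ = c}

theorem sum_mul_mix {η : ℕ} (w p q : Fin η → ℝ) (t : ℝ) :
    ∑ ℓ, w ℓ * (t * p ℓ + (1 - t) * q ℓ)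
      = t * ∑ ℓ, w ℓ * p ℓ + (1 - t) * ∑ ℓ, w ℓ * q ℓ := by
  rw [Finset.mul_sum, Finset.mul_sum, ← Finset.sum_add_distrib]
  exact Finset.sum_congr rfl fun ℓ _ => by ring

theorem IsProbMatching.mix {η : ℕ} {p q : Fin η → ℝ} (hp : IsProbMatching η p)
    (hq : IsProbMatching η q) {t : ℝ} (ht0 : 0 ≤ t) (ht1 : t ≤ 1) :
    IsProbMatching η (fun ℓ => t * p ℓ + (1 - t) * q ℓ) := by
  refine ⟨fun ℓ => add_nonneg (mul_nonneg ht0 (hp.1 ℓ))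
    (mul_nonneg (sub_nonneg.2 ht1) (hq.1 ℓ)), ?_⟩
  rw [Finset.sum_add_distrib, ← Finset.mul_sum, ← Finset.mul_sum, hp.2, hq.2]
  ring

theorem IsFair.mix {m η : ℕ} {M : Fin m → Fin η → ℝ} {θa θb : ℝ} {p q : Fin η → ℝ}
    (hp : IsFair m η M θa p) (hq : IsFair m η M θb q) {t : ℝ} (ht0 : 0 ≤ t) (ht1 : t ≤ 1) :
    IsFair m η M (t * θa + (1 - t) * θb) (fun ℓ => t * p ℓ + (1 - t) * q ℓ) := by
  intro r
  rw [sum_mul_mix]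
  exact add_le_add (mul_le_mul_of_nonneg_left (hp r) ht0)
    (mul_le_mul_of_nonneg_left (hq r) (sub_nonneg.2 ht1))

theorem IsProbMatching.le_one {η : ℕ} {p : Fin η → ℝ} (hp : IsProbMatching η p) (ℓ : Fin η) :
    p ℓ ≤ 1 :=
  hp.2 ▸ Finset.single_le_sum (fun i _ => hp.1 i) (Finset.mem_univ ℓ)

theorem F_le_cost {m η : ℕ} {M : Fin m → Fin η → ℝ} (cost : Fin η → ℝ) {θ : ℝ}
    {p : Fin η → ℝ} (hp : IsProbMatching η p) (hf : IsFair m η M θ p) :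
    F m η M cost θ ≤ ∑ ℓ, cost ℓ * p ℓ := by
  refine csInf_le ⟨-∑ ℓ, |cost ℓ|, ?_⟩ ⟨p, hp, hf, rfl⟩
  rintro c ⟨q, hq, -, rfl⟩
  rw [← Finset.sum_neg_distrib]
  refine Finset.sum_le_sum fun ℓ _ => ?_
  nlinarith [mul_le_mul_of_nonneg_right (neg_abs_le (cost ℓ)) (hq.1 ℓ),
    mul_le_mul_of_nonneg_left (hq.le_one ℓ) (abs_nonneg (cost ℓ))]

/-- Existence of `ε`-optimal fair matchings. Feasibility is needed, since `sInf ∅ = 0`. -/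
theorem exists_cost_lt_F_add {m η : ℕ} {M : Fin m → Fin η → ℝ} (cost : Fin η → ℝ) {θ : ℝ}
    (h : ∃ p : Fin η → ℝ, IsProbMatching η p ∧ IsFair m η M θ p) {ε : ℝ} (hε : 0 < ε) :
    ∃ p : Fin η → ℝ, IsProbMatching η p ∧ IsFair m η M θ p ∧
      ∑ ℓ, cost ℓ * p ℓ < F m η M cost θ + ε := by
  obtain ⟨p₀, hp₀, hf₀⟩ := h
  have hne : {c : ℝ | ∃ p : Fin η → ℝ,
      IsProbMatching η p ∧ IsFair m η M θ p ∧ ∑ ℓ, cost ℓ * p ℓ = c}.Nonempty :=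
    ⟨_, p₀, hp₀, hf₀, rfl⟩
  obtain ⟨c, ⟨p, hp, hf, rfl⟩, hc⟩ :=
    exists_lt_of_csInf_lt hne (lt_add_of_pos_right (F m η M cost θ) hε)
  exact ⟨p, hp, hf, hc⟩

/-- The optimal-cost function `F` is convex in the fairness level. -/
theorem F_convex_in_fairness
    (m η : ℕ) (hm : 1 ≤ m) (hη : 1 ≤ η)
    (M : Fin m → Fin η → ℝ) (hM : ∀ r ℓ, M r ℓ = 0 ∨ M r ℓ = 1)
    (cost : Fin η → ℝ)
    (θa θb : ℝ)
    (ha : ∃ p : Fin η → ℝ, IsProbMatching η p ∧ IsFair m η M θa p)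
    (hb : ∃ p : Fin η → ℝ, IsProbMatching η p ∧ IsFair m η M θb p)
    (lam : ℝ) (hlam0 : 0 ≤ lam) (hlam1 : lam ≤ 1) :
    (∃ p : Fin η → ℝ, IsProbMatching η p ∧
        IsFair m η M (lam * θa + (1 - lam) * θb) p) ∧
    F m η M cost (lam * θa + (1 - lam) * θb)
      ≤ lam * F m η M cost θa + (1 - lam) * F m η M cost θb := by
  constructor
  · obtain ⟨p, hp, hpf⟩ := ha
    obtain ⟨q, hq, hqf⟩ := hb
    exact ⟨_, hp.mix hq hlam0 hlam1, hpf.mix hqf hlam0 hlam1⟩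
  · refine le_of_forall_pos_le_add fun ε hε => ?_
    obtain ⟨p, hp, hpf, hpc⟩ := exists_cost_lt_F_add cost ha hε
    obtain ⟨q, hq, hqf, hqc⟩ := exists_cost_lt_F_add cost hb hε
    have h := F_le_cost cost (hp.mix hq hlam0 hlam1) (hpf.mix hqf hlam0 hlam1)
    rw [sum_mul_mix] at h
    have h₁ := mul_le_mul_of_nonneg_left hpc.le hlam0
    have h₂ := mul_le_mul_of_nonneg_left hqc.le (sub_nonneg.2 hlam1)
    linarith
end

section
/- The optimal-cost function is piecewise linear: there exists a finite family of pairs (a_i, b_i) of real numbers such that for every θ for which a θ-fair probabilistic matching exists, F(θ) equals the maximum over i of the affine value a_i + b_i·θ. -/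
/-- A predicate on a real vector space is polyhedral if it is the conjunction of finitely many
linear inequalities `f x ≤ b`, each stored as the pair `(f, b)`. -/
def IsPolyhedral {V : Type} [AddCommGroup V] [Module ℝ V] (Q : V → Prop) : Prop :=
  ∃ s : Set ((V →ₗ[ℝ] ℝ) × ℝ), s.Finite ∧ ∀ x, Q x ↔ ∀ c ∈ s, c.1 x ≤ c.2

section Polyhedral

variable {V W : Type} [AddCommGroup V] [Module ℝ V] [AddCommGroup W] [Module ℝ W]

lemma IsPolyhedral.le (f : V →ₗ[ℝ] ℝ) (b : ℝ) : IsPolyhedral (fun x => f x ≤ b) :=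
  ⟨{(f, b)}, Set.finite_singleton _, fun x => by simp⟩

lemma IsPolyhedral.and {P Q : V → Prop} (hP : IsPolyhedral P) (hQ : IsPolyhedral Q) :
    IsPolyhedral (fun x => P x ∧ Q x) := by
  obtain ⟨s, hs, hP⟩ := hP
  obtain ⟨t, ht, hQ⟩ := hQ
  refine ⟨s ∪ t, hs.union ht, fun x => ?_⟩
  simp only [hP, hQ, Set.mem_union, or_imp, forall_and]

lemma IsPolyhedral.forall {ι : Type} [Finite ι] {Q : ι → V → Prop}
    (hQ : ∀ i, IsPolyhedral (Q i)) : IsPolyhedral (fun x => ∀ i, Q i x) := by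
  choose s hs hQ using hQ
  refine ⟨⋃ i, s i, Set.finite_iUnion hs, fun x => ?_⟩
  simp only [hQ, Set.mem_iUnion]
  exact ⟨fun h c ⟨i, hc⟩ => h i c hc, fun h i c hc => h c ⟨i, hc⟩⟩

lemma IsPolyhedral.comp {Q : V → Prop} (hQ : IsPolyhedral Q) (g : W →ₗ[ℝ] V) :
    IsPolyhedral (fun x => Q (g x)) := by
  obtain ⟨s, hs, hQ⟩ := hQ
  refine ⟨(fun c => (c.1.comp g, c.2)) '' s, hs.image _, fun x => ?_⟩
  simp only [hQ, Set.forall_mem_image, LinearMap.comp_apply]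

/-- A finite set of lower bounds lying below a finite set of upper bounds leaves room for a
common point. -/
lemma exists_between_finite {L U : Set ℝ} (hL : L.Finite) (hU : U.Finite)
    (h : ∀ l ∈ L, ∀ u ∈ U, l ≤ u) : ∃ t, (∀ l ∈ L, l ≤ t) ∧ ∀ u ∈ U, t ≤ u := by
  rcases L.eq_empty_or_nonempty with rfl | hne
  · obtain ⟨t, ht⟩ := hU.bddBelow
    exact ⟨t, by simp, fun u hu => ht hu⟩
  · exact ⟨sSup L, fun l hl => le_csSup hL.bddAbove hl,
      fun u hu => csSup_le hne fun l hl => h l hl u hu⟩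

/-- One step of Fourier–Motzkin elimination: the variable `t` is removed by keeping the
inequalities in which its coefficient vanishes and adding, for each inequality `c` with positive
and each inequality `d` with negative coefficient, the positive combination of the two that
cancels `t`. -/
lemma IsPolyhedral.exists_real {Q : V × ℝ → Prop} (hQ : IsPolyhedral Q) :
    IsPolyhedral (fun x => ∃ t : ℝ, Q (x, t)) := by
  obtain ⟨s, hs, hQ⟩ := hQ
  let k : ((V × ℝ →ₗ[ℝ] ℝ) × ℝ) → ℝ := fun c => c.1 (0, 1)
  let r : ((V × ℝ →ₗ[ℝ] ℝ) × ℝ) → ((V →ₗ[ℝ] ℝ) × ℝ) :=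
    fun c => (c.1.comp (LinearMap.inl ℝ V ℝ), c.2)
  have hsplit : ∀ c : (V × ℝ →ₗ[ℝ] ℝ) × ℝ, ∀ x t, c.1 (x, t) = (r c).1 x + t * k c := by
    intro c x t
    have : ((x, t) : V × ℝ) = (x, 0) + t • ((0, 1) : V × ℝ) := by simp
    rw [this, map_add, map_smul]
    simp [r, k]
  refine ⟨r '' {c ∈ s | k c = 0} ∪
    Set.image2 (fun c d => k c • r d - k d • r c) {c ∈ s | 0 < k c} {d ∈ s | k d < 0},
    ((hs.sep _).image _).union ((hs.sep _).image2 _ (hs.sep _)), fun x => ?_⟩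
  constructor
  · rintro ⟨t, ht⟩ _ (⟨c, ⟨hc, hk⟩, rfl⟩ | ⟨c, ⟨hc, hkc⟩, d, ⟨hd, hkd⟩, rfl⟩)
    · have := (hQ _).1 ht c hc
      rw [hsplit, hk] at this
      simpa [r] using this
    · have h1 := (hQ _).1 ht c hc
      have h2 := (hQ _).1 ht d hd
      rw [hsplit] at h1 h2
      change k c * (r d).1 x - k d * (r c).1 x ≤ k c * d.2 - k d * c.2
      nlinarith [mul_le_mul_of_nonneg_left h2 hkc.le,
        mul_le_mul_of_nonneg_left h1 (neg_nonneg.2 hkd.le)]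
  · intro h
    obtain ⟨t, htL, htU⟩ := exists_between_finite
      (L := (fun d => (d.2 - (r d).1 x) / k d) '' {d ∈ s | k d < 0})
      (U := (fun c => (c.2 - (r c).1 x) / k c) '' {c ∈ s | 0 < k c})
      ((hs.sep _).image _) ((hs.sep _).image _) (by
        rintro _ ⟨d, ⟨hd, hkd⟩, rfl⟩ _ ⟨c, ⟨hc, hkc⟩, rfl⟩
        have := h _ (Or.inr ⟨c, ⟨hc, hkc⟩, d, ⟨hd, hkd⟩, rfl⟩)
        change k c * (r d).1 x - k d * (r c).1 x ≤ k c * d.2 - k d * c.2 at this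
        change (d.2 - (r d).1 x) / k d ≤ (c.2 - (r c).1 x) / k c
        rw [div_le_iff_of_neg hkd, div_mul_eq_mul_div, div_le_iff₀ hkc]
        linarith)
    refine ⟨t, (hQ _).2 fun c hc => ?_⟩
    rw [hsplit]
    rcases lt_trichotomy (k c) 0 with hk | hk | hk
    · have := htL _ ⟨c, ⟨hc, hk⟩, rfl⟩
      simp only [div_le_iff_of_neg hk] at this
      linarith
    · have := h _ (Or.inl ⟨c, ⟨hc, hk⟩, rfl⟩)
      rw [hk, mul_zero, add_zero]
      exact this
    · have := htU _ ⟨c, ⟨hc, hk⟩, rfl⟩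
      simp only [le_div_iff₀ hk] at this
      linarith

end Polyhedral

/-- Projections of polyhedra along finitely many coordinates are polyhedral. -/
lemma IsPolyhedral.exists_fin (k : ℕ) : ∀ {V : Type} [AddCommGroup V] [Module ℝ V]
    {Q : V × (Fin k → ℝ) → Prop}, IsPolyhedral Q →
    IsPolyhedral (fun x => ∃ p : Fin k → ℝ, Q (x, p)) := by
  induction k with
  | zero =>
    intro V _ _ Q hQ
    have h := hQ.comp (LinearMap.inl ℝ V (Fin 0 → ℝ))
    have e : (fun x => ∃ p : Fin 0 → ℝ, Q (x, p)) =
        fun x => Q (LinearMap.inl ℝ V (Fin 0 → ℝ) x) := by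
      funext x
      refine propext ⟨fun ⟨p, hp⟩ => ?_, fun h => ⟨0, h⟩⟩
      rwa [Subsingleton.elim p 0] at hp
    rwa [e]
  | succ k ih =>
    intro V _ _ Q hQ
    let g : (V × ℝ) × (Fin k → ℝ) →ₗ[ℝ] V × (Fin (k + 1) → ℝ) :=
      { toFun := fun y => (y.1.1, Fin.cons y.1.2 y.2)
        map_add' := fun y z => by
          refine Prod.ext rfl (funext fun i => ?_)
          refine Fin.cases ?_ (fun j => ?_) i <;> simp
        map_smul' := fun a y => by
          refine Prod.ext rfl (funext fun i => ?_)
          refine Fin.cases ?_ (fun j => ?_) i <;> simp }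
    have h := (ih (hQ.comp g)).exists_real
    have e : (fun x => ∃ p : Fin (k + 1) → ℝ, Q (x, p)) =
        fun x => ∃ t : ℝ, ∃ p : Fin k → ℝ, Q (g ((x, t), p)) := by
      funext x
      refine propext ⟨fun ⟨p, hp⟩ => ⟨p 0, Fin.tail p, ?_⟩, fun ⟨t, p, hp⟩ => ⟨_, hp⟩⟩
      change Q (x, Fin.cons (p 0) (Fin.tail p))
      rwa [Fin.cons_self_tail]
    rwa [e]

/-- The epigraph of the optimal-cost function, as pairs `(θ, c)`, is a polyhedron. -/
lemma isPolyhedral_epigraph (m η : ℕ) (M : Fin m → Fin η → ℝ) (cost : Fin η → ℝ) :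
    IsPolyhedral (fun x : ℝ × ℝ => ∃ p : Fin η → ℝ,
      IsProbMatching η p ∧ IsFair m η M x.1 p ∧ ∑ ℓ, cost ℓ * p ℓ ≤ x.2) := by
  let P : (ℝ × ℝ) × (Fin η → ℝ) →ₗ[ℝ] (Fin η → ℝ) := LinearMap.snd ℝ _ _
  let Θ : (ℝ × ℝ) × (Fin η → ℝ) →ₗ[ℝ] ℝ := (LinearMap.fst ℝ ℝ ℝ).comp (LinearMap.fst ℝ _ _)
  let C : (ℝ × ℝ) × (Fin η → ℝ) →ₗ[ℝ] ℝ := (LinearMap.snd ℝ ℝ ℝ).comp (LinearMap.fst ℝ _ _)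
  let D : (Fin η → ℝ) → (ℝ × ℝ) × (Fin η → ℝ) →ₗ[ℝ] ℝ := fun w =>
    ∑ ℓ, w ℓ • (LinearMap.proj ℓ).comp P
  have hD : ∀ w y, D w y = ∑ ℓ, w ℓ * y.2 ℓ := fun w y => by simp [D, P]
  have hpos := IsPolyhedral.forall fun ℓ => IsPolyhedral.le (-(LinearMap.proj ℓ).comp P) 0
  have hsum := (IsPolyhedral.le (D 1) 1).and (IsPolyhedral.le (-D 1) (-1))
  have hfair := IsPolyhedral.forall fun r => IsPolyhedral.le (Θ - D (M r)) 0
  have hcost := IsPolyhedral.le (D cost - C) 0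
  convert ((hpos.and hsum).and (hfair.and hcost)).exists_fin η using 4 with x p
  simp only [LinearMap.neg_apply, LinearMap.sub_apply, hD]
  simp [IsProbMatching, IsFair, P, Θ, C, le_antisymm_iff, and_assoc]

lemma neg_sum_abs_le_cost {η : ℕ} (cost : Fin η → ℝ) {p : Fin η → ℝ}
    (hp : IsProbMatching η p) : -∑ ℓ, |cost ℓ| ≤ ∑ ℓ, cost ℓ * p ℓ := by
  rw [← Finset.sum_neg_distrib]
  refine Finset.sum_le_sum fun ℓ _ => ?_
  have h1 : p ℓ ≤ 1 :=
    hp.2 ▸ Finset.single_le_sum (fun i _ => hp.1 i) (Finset.mem_univ ℓ)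
  nlinarith [hp.1 ℓ, neg_abs_le (cost ℓ), abs_nonneg (cost ℓ)]

/-- The optimal-cost function `F` is piecewise linear: there is a
finite (nonempty) family of affine functions `θ ↦ a i + b i * θ` whose pointwise
maximum equals `F θ` whenever a `θ`-fair probabilistic matching exists. -/
theorem F_piecewise_linear
    (m η : ℕ) (hm : 1 ≤ m) (hη : 1 ≤ η)
    (M : Fin m → Fin η → ℝ) (hM : ∀ r ℓ, M r ℓ = 0 ∨ M r ℓ = 1)
    (cost : Fin η → ℝ) :
    ∃ (n : ℕ) (a b : Fin (n + 1) → ℝ),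
      ∀ θ : ℝ, (∃ p : Fin η → ℝ, IsProbMatching η p ∧ IsFair m η M θ p) →
        F m η M cost θ
          = Finset.univ.sup' Finset.univ_nonempty (fun i => a i + b i * θ) := by
  obtain ⟨s, hs, hG⟩ := isPolyhedral_epigraph m η M cost
  have hsplit : ∀ f : ℝ × ℝ →ₗ[ℝ] ℝ, ∀ θ c, f (θ, c) = θ * f (1, 0) + c * f (0, 1) := by
    intro f θ c
    have : ((θ, c) : ℝ × ℝ) = θ • ((1, 0) : ℝ × ℝ) + c • ((0, 1) : ℝ × ℝ) := by simp
    rw [this, map_add, map_smul, map_smul]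
    simp
  let R : Set (ℝ × ℝ) := insert (-∑ ℓ, |cost ℓ|, 0)
    ((fun c : (ℝ × ℝ →ₗ[ℝ] ℝ) × ℝ => (c.2 / c.1 (0, 1), -c.1 (1, 0) / c.1 (0, 1))) ''
      {c ∈ s | c.1 (0, 1) < 0})
  have hR : R.Finite := ((hs.sep _).image _).insert _
  obtain ⟨n, e, he⟩ : ∃ (n : ℕ) (e : Fin (n + 1) → ℝ × ℝ), Set.range e = R := by
    obtain ⟨N, e, he⟩ := hR.fin_param
    cases N with
    | zero =>
      have h0 : (-∑ ℓ, |cost ℓ|, 0) ∈ R := Set.mem_insert _ _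
      rw [← he.2] at h0
      obtain ⟨i, -⟩ := h0
      exact i.elim0
    | succ n => exact ⟨n, e, he.2⟩
  refine ⟨n, fun i => (e i).1, fun i => (e i).2, fun θ hθ => ?_⟩
  obtain ⟨p₀, hp₀, hf₀⟩ := hθ
  apply le_antisymm
  · set v := Finset.univ.sup' Finset.univ_nonempty (fun i => (e i).1 + (e i).2 * θ) with hv
    have hle : ∀ q ∈ R, q.1 + q.2 * θ ≤ v := by
      intro q hq
      rw [← he] at hq
      obtain ⟨i, rfl⟩ := hq
      exact Finset.le_sup' (fun i => (e i).1 + (e i).2 * θ) (Finset.mem_univ i)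
    -- Some admissible value lies above `v`; it controls the inequalities with `B ≥ 0` at `v`.
    have hmax := (hG (θ, max v (∑ ℓ, cost ℓ * p₀ ℓ))).1 ⟨p₀, hp₀, hf₀, le_max_right _ _⟩
    obtain ⟨p, hp, hf, hc⟩ := (hG (θ, v)).2 (by
      intro c hc
      have h1 := hmax c hc
      rw [hsplit] at h1 ⊢
      rcases lt_or_ge (c.1 (0, 1)) 0 with hB | hB
      · have h2 := hle _ (Or.inr ⟨c, ⟨hc, hB⟩, rfl⟩)
        have h3 : c.2 / c.1 (0, 1) + -c.1 (1, 0) / c.1 (0, 1) * θ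
            = (c.2 - θ * c.1 (1, 0)) / c.1 (0, 1) := by ring
        simp only [h3, div_le_iff_of_neg hB] at h2
        linarith
      · nlinarith [mul_le_mul_of_nonneg_right (le_max_left v (∑ ℓ, cost ℓ * p₀ ℓ)) hB])
    refine le_trans (csInf_le ⟨-∑ ℓ, |cost ℓ|, ?_⟩ ⟨p, hp, hf, rfl⟩) hc
    rintro _ ⟨q, hq, -, rfl⟩
    exact neg_sum_abs_le_cost cost hq
  · refine le_csInf ⟨_, p₀, hp₀, hf₀, rfl⟩ ?_
    rintro _ ⟨p, hp, hf, rfl⟩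
    refine Finset.sup'_le _ _ fun i _ => ?_
    change (e i).1 + (e i).2 * θ ≤ _
    have hi : e i ∈ R := he ▸ Set.mem_range_self i
    rcases hi with hi | ⟨c, ⟨hc, hB⟩, hi⟩
    · rw [hi]
      simpa using neg_sum_abs_le_cost cost hp
    · have h1 := (hG (θ, ∑ ℓ, cost ℓ * p ℓ)).1 ⟨p, hp, hf, le_rfl⟩ c hc
      rw [hsplit] at h1
      rw [← hi]
      have h3 : c.2 / c.1 (0, 1) + -c.1 (1, 0) / c.1 (0, 1) * θ
          = (c.2 - θ * c.1 (1, 0)) / c.1 (0, 1) := by ring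
      simp only [h3, div_le_iff_of_neg hB]
      linarith
end

section
/- In the two-rider, one-driver instance with deterministic matchings of costs 1 (serving rider 1 only) and C (serving rider 2 only), for every C ≥ 1 and θ ∈ [0, 1/2] the minimum of p₁·1 + p₂·C over p₁, p₂ ≥ 0 with p₁ + p₂ = 1, p₁ ≥ θ and p₂ ≥ θ equals 1 + θ·(C − 1). Consequently, for every K ≥ 1 and every θ ∈ (0, 1/2], taking C = 1 + (K − 1)/θ ≥ 1 makes the ratio of this θ-fair optimum to the unconstrained optimum (which equals 1) exactly K; hence the price of fairness can be made equal to any prescribed K ≥ 1. -/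
/-- In the two-rider one-driver instance (costs `1` and `C`),
the `θ`-fair minimum expected cost is `1 + θ * (C - 1)` for `C ≥ 1` and
`θ ∈ [0, 1/2]`; consequently, for any `K ≥ 1` and `θ ∈ (0, 1/2]`, choosing
`C = 1 + (K - 1)/θ ≥ 1` makes the price of fairness (the ratio of the θ-fair
optimum to the unconstrained optimum, which equals `1`) exactly `K`. -/
theorem pof_arbitrarily_large :
    (∀ C θ : ℝ, 1 ≤ C → 0 ≤ θ → θ ≤ 1 / 2 →
      IsLeast {v : ℝ | ∃ p₁ p₂ : ℝ, 0 ≤ p₁ ∧ 0 ≤ p₂ ∧ p₁ + p₂ = 1 ∧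
          θ ≤ p₁ ∧ θ ≤ p₂ ∧ v = p₁ * 1 + p₂ * C}
        (1 + θ * (C - 1))) ∧
    (∀ K θ : ℝ, 1 ≤ K → 0 < θ → θ ≤ 1 / 2 →
      (1 : ℝ) ≤ 1 + (K - 1) / θ ∧
      (1 + θ * ((1 + (K - 1) / θ) - 1)) / 1 = K) := by
  refine ⟨fun C θ hC h0 h1 => ⟨?_, ?_⟩, fun K θ hK h0 _ => ⟨?_, ?_⟩⟩
  · -- The optimum puts the least allowed probability on the expensive matching.
    exact ⟨1 - θ, θ, by linarith, h0, by ring, by linarith, le_rfl, by ring⟩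
  · rintro v ⟨p₁, p₂, -, -, hsum, -, h2, rfl⟩
    -- The cost is `1 + p₂ * (C - 1)`, which is monotone in `p₂`.
    obtain rfl : p₁ = 1 - p₂ := by linarith
    nlinarith [mul_nonneg (sub_nonneg.2 h2) (sub_nonneg.2 hC)]
  · have : 0 ≤ (K - 1) / θ := div_nonneg (by linarith) h0.le
    linarith
  · field_simp
    ring
end

section
/- Single-driver price-of-fairness bound (case where the min-cost outcome serves a rider): let n ≥ 1, let c : Fin n → ℝ give the cost of the driver serving rider i (option i matches exactly rider i), let c* = min_i c i with c* ≥ 0, and suppose c i ≤ R·c* for all i with R ≥ 1. Then for every θ ∈ [0, 1/n] there exists p : Fin n → ℝ with p i ≥ θ for all i, p i ≥ 0, ∑_i p i = 1, and ∑_i p i · c i ≤ (θ·(n−1)·(R−1) + 1)·c*. -/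
/-!
Every rider receives the mandatory probability `θ`, and the remaining mass `1 - n θ ≥ 0` goes to a
rider `k` of minimum cost. The expected cost is then `θ ∑ c i + (1 - n θ) c*`, and
`∑ c i ≤ (n - 1) R c* + c*` because rider `k` costs `c*` and every other rider at most `R c*`.
-/

/-- Single-driver price-of-fairness bound, case `|S*_d| > 0`:
there is a `θ`-fair probabilistic assignment with expected cost at most
`(θ (n-1) (R-1) + 1) c*`. -/
theorem single_driver_pof_bound_served
    (n : ℕ) (hn : 1 ≤ n) (c : Fin n → ℝ) (cstar R : ℝ)
    (hcstar : cstar = Finset.univ.inf' ⟨⟨0, hn⟩, Finset.mem_univ _⟩ c)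
    (hcstar0 : 0 ≤ cstar) (hR : 1 ≤ R)
    (hle : ∀ i, c i ≤ R * cstar)
    (θ : ℝ) (hθ0 : 0 ≤ θ) (hθ1 : θ ≤ 1 / (n : ℝ)) :
    ∃ p : Fin n → ℝ,
      (∀ i, θ ≤ p i) ∧ (∀ i, 0 ≤ p i) ∧ (∑ i, p i = 1) ∧
      ∑ i, p i * c i ≤ (θ * ((n : ℝ) - 1) * (R - 1) + 1) * cstar := by
  obtain ⟨k, -, hk⟩ := Finset.exists_mem_eq_inf' ⟨⟨0, hn⟩, Finset.mem_univ _⟩ c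
  have hck : c k = cstar := by rw [hcstar, hk]
  have hnpos : (0 : ℝ) < n := by exact_mod_cast hn
  have hmass : 0 ≤ 1 - n * θ := by
    have := (le_div_iff₀ hnpos).1 hθ1
    linarith
  have hfair : ∀ i, θ ≤ θ + if i = k then 1 - n * θ else 0 := by
    intro i
    split_ifs <;> linarith
  refine ⟨fun i => θ + if i = k then 1 - n * θ else 0, hfair,
    fun i => hθ0.trans (hfair i), ?_, ?_⟩
  · simp [Finset.sum_add_distrib]
  · have hsum : ∑ i, c i ≤ n * (R * cstar) + (1 - R) * cstar := by
      calc ∑ i, c i ≤ ∑ i, (R * cstar + if i = k then (1 - R) * cstar else 0) := by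
            refine Finset.sum_le_sum fun i _ => ?_
            split_ifs with h
            · rw [h, hck]
              linarith
            · linarith [hle i]
        _ = n * (R * cstar) + (1 - R) * cstar := by simp [Finset.sum_add_distrib]
    have hcost : ∑ i, (θ + if i = k then 1 - n * θ else 0) * c i
        = θ * ∑ i, c i + (1 - n * θ) * cstar := by
      simp [add_mul, Finset.sum_add_distrib, Finset.mul_sum, hck]
    rw [hcost]
    linarith [mul_le_mul_of_nonneg_left hsum hθ0]
end

section
/- Single-driver price-of-fairness bound (case where the min-cost outcome serves no rider): let n ≥ 1, let c₀ ≥ 0 be the cost of the driver driving alone (matching no rider), and let c : Fin n → ℝ give the cost of serving rider i, with c i ≤ R·c₀ for all i and R ≥ 1. Then for every θ ∈ [0, 1/n] there exists a probability vector p over the n+1 options (option 0 = drive alone with cost c₀, option i = serve rider i with cost c i) such that each rider i is selected with probability at least θ and the expected cost is at most (θ·n·(R−1) + 1)·c₀. -/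
/-- Single-driver price-of-fairness bound, case `|S*_d| = 0`
(the min-cost outcome serves no rider): there is a `θ`-fair probabilistic
assignment over the `n + 1` options (option 0 = drive alone at cost `c₀`,
option `i` = serve rider `i` at cost `c i`) with expected cost at most
`(θ n (R-1) + 1) c₀`. -/
theorem single_driver_pof_bound_unserved
    (n : ℕ) (hn : 1 ≤ n) (c₀ : ℝ) (hc₀ : 0 ≤ c₀)
    (c : Fin n → ℝ) (R : ℝ) (hR : 1 ≤ R)
    (hle : ∀ i, c i ≤ R * c₀)
    (θ : ℝ) (hθ0 : 0 ≤ θ) (hθ1 : θ ≤ 1 / (n : ℝ)) :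
    ∃ (p₀ : ℝ) (p : Fin n → ℝ),
      0 ≤ p₀ ∧ (∀ i, 0 ≤ p i) ∧ (p₀ + ∑ i, p i = 1) ∧
      (∀ i, θ ≤ p i) ∧
      p₀ * c₀ + ∑ i, p i * c i ≤ (θ * (n : ℝ) * (R - 1) + 1) * c₀ := by
  have hn' : (0 : ℝ) < n := by exact_mod_cast hn
  have hθn : θ * n ≤ 1 := (le_div_iff₀ hn').mp hθ1
  -- Serve each rider with probability exactly `θ`; drive alone with the remaining `1 - θ n`.
  refine ⟨1 - θ * n, fun _ => θ, by linarith, fun _ => hθ0, ?_, fun _ => le_rfl, ?_⟩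
  · simp [mul_comm]
  · have h : ∑ i, θ * c i ≤ ∑ _i : Fin n, θ * (R * c₀) :=
      Finset.sum_le_sum fun i _ => mul_le_mul_of_nonneg_left (hle i) hθ0
    rw [Finset.sum_const, Finset.card_univ, Fintype.card_fin, nsmul_eq_mul] at h
    linarith
end

section
/- Tightness of the single-driver price-of-fairness bound: let n ≥ 1, c* ≥ 0, R ≥ 1, fix a distinguished index i* ∈ Fin n, and define c : Fin n → ℝ by c i* = c* and c i = R·c* for i ≠ i*. Then for every θ ∈ [0, 1/n], the minimum of ∑_i p i · c i over all p : Fin n → ℝ with p i ≥ 0, ∑_i p i = 1 and p i ≥ θ for all i equals (θ·(n−1)·(R−1) + 1)·c*. -/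
/-!
Since all costs other than `c istar` coincide, the expected cost of a probability vector `p` is
`R c* - (R - 1) c* p istar`, which is nonincreasing in `p istar`. Fairness of the other `n - 1`
coordinates gives `p istar ≤ 1 - (n - 1) θ`, and equality is attained by giving mass `θ` to every
index and the leftover mass `1 - n θ ≥ 0` to `istar`.
-/

/-- Tightness of the single-driver price-of-fairness bound:
with one cheap option of cost `c*` and all other options of cost `R·c*`,
the `θ`-fair minimum expected cost equals `(θ (n-1) (R-1) + 1) c*` for every
`θ ∈ [0, 1/n]`. -/
theorem single_driver_pof_bound_tight
    (n : ℕ) (hn : 1 ≤ n) (cstar R : ℝ) (hcstar0 : 0 ≤ cstar) (hR : 1 ≤ R)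
    (istar : Fin n) (c : Fin n → ℝ)
    (hcistar : c istar = cstar)
    (hcother : ∀ i, i ≠ istar → c i = R * cstar)
    (θ : ℝ) (hθ0 : 0 ≤ θ) (hθ1 : θ ≤ 1 / (n : ℝ)) :
    IsLeast {v : ℝ | ∃ p : Fin n → ℝ,
        (∀ i, 0 ≤ p i) ∧ (∑ i, p i = 1) ∧ (∀ i, θ ≤ p i) ∧
        v = ∑ i, p i * c i}
      ((θ * ((n : ℝ) - 1) * (R - 1) + 1) * cstar) := by
  -- The expected cost depends on `p` only through `p istar`.
  have cost : ∀ p : Fin n → ℝ, ∑ i, p i = 1 →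
      ∑ i, p i * c i = R * cstar - (R - 1) * cstar * p istar := by
    intro p hp
    have hc : ∀ i, p i * c i
        = p i * (R * cstar) - (if i = istar then (R - 1) * cstar * p istar else 0) := by
      intro i
      split_ifs with h
      · rw [h, hcistar]; ring
      · rw [hcother i h]; ring
    simp_rw [hc]
    rw [Finset.sum_sub_distrib, ← Finset.sum_mul, hp]
    simp
  have hnpos : (0 : ℝ) < n := by exact_mod_cast hn
  have hnθ : θ * n ≤ 1 := (le_div_iff₀ hnpos).mp hθ1
  constructor
  · have hsum : ∑ i, (θ + if i = istar then 1 - θ * n else 0) = 1 := by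
      rw [Finset.sum_add_distrib]
      simp
      ring
    have hfair : ∀ i, θ ≤ θ + if i = istar then 1 - θ * n else 0 := by
      intro i
      split_ifs <;> linarith
    refine ⟨fun i => θ + if i = istar then 1 - θ * n else 0,
      fun i => hθ0.trans (hfair i), hsum, hfair, ?_⟩
    rw [cost _ hsum, if_pos rfl]
    ring
  · rintro v ⟨p, -, hp, hfair, rfl⟩
    rw [cost p hp]
    -- The nonnegative excess `p istar - θ` is at most the total excess `1 - n θ`.
    have hle : p istar - θ ≤ ∑ i, (p i - θ) :=
      Finset.single_le_sum (f := fun i => p i - θ)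
        (fun i _ => sub_nonneg.mpr (hfair i)) (Finset.mem_univ istar)
    rw [Finset.sum_sub_distrib, hp] at hle
    simp only [Finset.sum_const, Finset.card_univ, Fintype.card_fin, nsmul_eq_mul] at hle
    have hgap : 0 ≤ (R - 1) * cstar := mul_nonneg (sub_nonneg.mpr hR) hcstar0
    nlinarith [mul_le_mul_of_nonneg_left hle hgap]
end

section
/- Correctness of the bisection step for computing a convex piecewise-linear Pareto frontier: let f : ℝ → ℝ be convex, let a < m < b be real numbers, and let g₁, g₂ : ℝ → ℝ be affine functions such that g₁(x) ≤ f(x) and g₂(x) ≤ f(x) for all x ∈ [a,b], g₁(a) = f(a), g₂(b) = f(b), and g₁(m) = g₂(m) = f(m). Then f(x) = max(g₁(x), g₂(x)) for every x ∈ [a,b]. -/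
/-!
On `[a, m]` the graph of `g₁` is the chord of `f`, so convexity gives `f ≤ g₁` there, and likewise
`f ≤ g₂` on `[m, b]` (`le_affine_of_eq_endpoints`). Together with `g₁, g₂ ≤ f` on `[a, b]` this
forces `f = max g₁ g₂`.
-/

/-- A convex function lies below its chord: an affine `g` agreeing with `f` at `u` and `v`
dominates `f` on `[u, v]`. -/
lemma le_affine_of_eq_endpoints {f g : ℝ → ℝ} (hf : ConvexOn ℝ Set.univ f)
    (hg : ∃ p q : ℝ, ∀ x, g x = p + q * x) {u v x : ℝ} (hu : g u = f u) (hv : g v = f v)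
    (hux : u ≤ x) (hxv : x ≤ v) : f x ≤ g x := by
  obtain ⟨p, q, hpq⟩ := hg
  have hx : x ∈ segment ℝ u v := by
    rw [segment_eq_Icc (hux.trans hxv)]
    exact ⟨hux, hxv⟩
  obtain ⟨s, t, hs, ht, hst, rfl⟩ := hx
  calc f (s • u + t • v) ≤ s • f u + t • f v :=
        hf.2 (Set.mem_univ u) (Set.mem_univ v) hs ht hst
    _ = g (s • u + t • v) := by
        rw [← hu, ← hv, hpq, hpq, hpq]
        simp only [smul_eq_mul]
        linear_combination p * hst

/-- Correctness of the bisection step for a convex function: if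
two affine minorants of a convex `f` on `[a, b]` touch `f` at `a` (resp. `b`)
and both touch `f` at an interior point `m`, then `f` equals their pointwise
maximum on all of `[a, b]`. -/
theorem bisection_step_correct
    (f g₁ g₂ : ℝ → ℝ) (hf : ConvexOn ℝ Set.univ f)
    (a m b : ℝ) (ham : a < m) (hmb : m < b)
    (hg₁affine : ∃ p q : ℝ, ∀ x, g₁ x = p + q * x)
    (hg₂affine : ∃ p q : ℝ, ∀ x, g₂ x = p + q * x)
    (hg₁le : ∀ x ∈ Set.Icc a b, g₁ x ≤ f x)
    (hg₂le : ∀ x ∈ Set.Icc a b, g₂ x ≤ f x)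
    (hg₁a : g₁ a = f a) (hg₂b : g₂ b = f b)
    (hg₁m : g₁ m = f m) (hg₂m : g₂ m = f m) :
    ∀ x ∈ Set.Icc a b, f x = max (g₁ x) (g₂ x) := by
  intro x hx
  refine le_antisymm ?_ (max_le (hg₁le x hx) (hg₂le x hx))
  rcases le_total x m with hxm | hmx
  · exact (le_affine_of_eq_endpoints hf hg₁affine hg₁a hg₁m hx.1 hxm).trans (le_max_left _ _)
  · exact (le_affine_of_eq_endpoints hf hg₂affine hg₂m hg₂b hmx hx.2).trans (le_max_right _ _)
end

section
/- Cost minimization is equivalent to welfare maximization with altruistic drivers: let Π be a finite nonempty set of schedules, R a finite set of riders, D a finite set of drivers, and σ : Π → R → Option D assign to each schedule the driver (if any) serving each rider. Given constants ν_r, λ_r (for riders), ν_d, ρ_d (for drivers) and cost functions Cr : Π → R → ℝ, Cd : Π → D → ℝ, define rider utility U_r(π) = ν_r − Cr π r if σ π r ≠ none and U_r(π) = ν_r − λ_r otherwise; driver utility Ũ_d(π) = ν_d − Cd π d + ρ_d · ∑_{r : σ π r = some d} U_r(π); total welfare W(π) = ∑_r U_r(π) + ∑_d Ũ_d(π); and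 modified total cost K(π) = ∑_d Cd π d + ∑_d ∑_{r : σ π r = some d} (1 + ρ_d)·Cr π r + ∑_{r : σ π r = none} λ_r − ∑_d ρ_d · ∑_{r : σ π r = some d} ν_r. Then W(π) = (∑_r ν_r + ∑_d ν_d) − K(π) for every π ∈ Π, and consequently a schedule π* maximizes W over Π if and only if π* minimizes K over Π. -/
/-!
Partitioning the riders by `σ π` into unmatched riders and the groups served by each driver
rewrites every rider sum as a sum over these blocks (`sum_eq_sum_none_add_sum_some`). On each
block `U` has a single closed form, so the welfare identity `W = const - K` is linear algebra in
the block sums, and the equivalence of the two optimization problems is immediate.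
-/

/-- Riders split into the unmatched ones and, for each driver, those the driver serves. -/
lemma sum_eq_sum_none_add_sum_some {R D : Type*} [Fintype R] [Fintype D] [DecidableEq D]
    (s : R → Option D) (f : R → ℝ) :
    ∑ r, f r = (∑ r ∈ Finset.univ.filter (fun r => s r = none), f r)
      + ∑ d, ∑ r ∈ Finset.univ.filter (fun r => s r = some d), f r := by
  rw [← Finset.sum_fiberwise Finset.univ s f, Fintype.sum_option]

/-- Cost minimization is equivalent to welfare maximization with
altruistic drivers: total welfare `W π` equals the constant
`∑ r, ν r + ∑ d, ν d` minus the modified total cost `K π`, hence a schedule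
maximizes welfare iff it minimizes the modified total cost. -/
theorem welfare_max_iff_cost_min
    {Sch R D : Type*} [Fintype Sch] [Nonempty Sch] [Fintype R] [Fintype D]
    [DecidableEq D]
    (σ : Sch → R → Option D)
    (νr lamr : R → ℝ) (νd ρd : D → ℝ)
    (Cr : Sch → R → ℝ) (Cd : Sch → D → ℝ)
    (U : Sch → R → ℝ)
    (hU : ∀ π r, U π r = if σ π r = none then νr r - lamr r else νr r - Cr π r)
    (Ut : Sch → D → ℝ)
    (hUt : ∀ π d, Ut π d = νd d - Cd π d +
      ρd d * ∑ r ∈ Finset.univ.filter (fun r => σ π r = some d), U π r)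
    (W : Sch → ℝ)
    (hW : ∀ π, W π = (∑ r, U π r) + ∑ d, Ut π d)
    (K : Sch → ℝ)
    (hK : ∀ π, K π = (∑ d, Cd π d)
      + (∑ d, ∑ r ∈ Finset.univ.filter (fun r => σ π r = some d), (1 + ρd d) * Cr π r)
      + (∑ r ∈ Finset.univ.filter (fun r => σ π r = none), lamr r)
      - ∑ d, ρd d * ∑ r ∈ Finset.univ.filter (fun r => σ π r = some d), νr r) :
    (∀ π, W π = ((∑ r, νr r) + ∑ d, νd d) - K π) ∧
    ∀ πstar : Sch, (∀ π, W π ≤ W πstar) ↔ (∀ π, K πstar ≤ K π) := by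
  have key : ∀ π, W π = ((∑ r, νr r) + ∑ d, νd d) - K π := by
    intro π
    have hsome : ∀ d, ∑ r ∈ Finset.univ.filter (fun r => σ π r = some d), U π r
        = (∑ r ∈ Finset.univ.filter (fun r => σ π r = some d), νr r)
          - ∑ r ∈ Finset.univ.filter (fun r => σ π r = some d), Cr π r := by
      intro d
      rw [← Finset.sum_sub_distrib]
      refine Finset.sum_congr rfl fun r hr => ?_
      simp [hU, (Finset.mem_filter.mp hr).2]
    have hnone : ∑ r ∈ Finset.univ.filter (fun r => σ π r = none), U π r
        = (∑ r ∈ Finset.univ.filter (fun r => σ π r = none), νr r)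
          - ∑ r ∈ Finset.univ.filter (fun r => σ π r = none), lamr r := by
      rw [← Finset.sum_sub_distrib]
      refine Finset.sum_congr rfl fun r hr => ?_
      simp [hU, (Finset.mem_filter.mp hr).2]
    rw [hW, hK, sum_eq_sum_none_add_sum_some (σ π) (U π),
      sum_eq_sum_none_add_sum_some (σ π) νr, hnone]
    simp only [hUt, hsome, ← Finset.mul_sum, add_mul, one_mul, mul_sub,
      Finset.sum_add_distrib, Finset.sum_sub_distrib]
    ring
  refine ⟨key, fun πstar => forall_congr' fun π => ?_⟩
  rw [key π, key πstar, sub_le_sub_iff_left]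
end
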